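/- Let G be a (possibly infinite) graph, let s, t ∈ V(G) be distinct, and let 𝒫 be a system of pairwise edge-disjoint st-paths. Then there is a large st-wave 𝒲 such that the set of edges of 𝒲 incident with s contains the set of edges of 𝒫 incident with s. -/

import Mathlib

/-!
Common definitions: multigraphs (parallel edges allowed, no loops), walks,
paths, cuts, waves and related notions used in the statements below.
-/

universe u v

/-- A multigraph with vertex type `V` and edge type `E`: every edge is assigned
an unordered pair of *distinct* end-vertices (parallel edges allowed, no loops). -/
structure Multigraph (V : Type u) (E : Type v) : Type (max u v) where
  inc : E → Sym2 V
  not_isDiag : ∀ e, ¬ (inc e).IsDiag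

namespace Multigraph

variable {V : Type u} {E : Type v}

/-- Walks in a multigraph, recorded together with the edges they traverse. -/
inductive Walk (G : Multigraph V E) : V → V → Type (max u v)
  | nil (v : V) : Walk G v v
  | cons {u v w : V} (e : E) (he : G.inc e = s(u, v)) (p : Walk G v w) : Walk G u w

namespace Walk

variable {G : Multigraph V E}

/-- The list of vertices visited by a walk. -/
def support : ∀ {u w : V}, G.Walk u w → List V
  | _, _, .nil v => [v]
  | u, _, .cons _ _ p => u :: p.support

/-- The list of edges traversed by a walk. -/
def edges : ∀ {u w : V}, G.Walk u w → List E
  | _, _, .nil _ => []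
  | _, _, .cons e _ p => e :: p.edges

end Walk

/-- `δ_G(v)`: the set of edges incident with the vertex `v`. -/
def inci (G : Multigraph V E) (v : V) : Set E := {e | v ∈ G.inc e}

/-- `δ_G(X)`: the set of edges with exactly one end-vertex in `X`. -/
def cut (G : Multigraph V E) (X : Set V) : Set E :=
  {e | ∃ x y, G.inc e = s(x, y) ∧ x ∈ X ∧ y ∉ X}

/-- Connectedness of a multigraph. -/
def Connected (G : Multigraph V E) : Prop := ∀ u v : V, Nonempty (G.Walk u v)

/-- A `T`-path: a path connecting two distinct vertices of `T`
with no internal vertex in `T`. -/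
structure TPath (G : Multigraph V E) (T : Set V) : Type (max u v) where
  first : V
  last : V
  walk : G.Walk first last
  first_mem : first ∈ T
  last_mem : last ∈ T
  ne : first ≠ last
  support_nodup : walk.support.Nodup
  internal : ∀ x ∈ walk.support, x ∈ T → x = first ∨ x = last

/-- A system of pairwise edge-disjoint `T`-paths. -/
def TPathDisjoint (G : Multigraph V E) {T : Set V} (P : Set (G.TPath T)) : Prop :=
  ∀ p ∈ P, ∀ q ∈ P, p ≠ q → ∀ e, e ∈ p.walk.edges → e ∉ q.walk.edges

/-- An `st`-path: a path from `s` to `t` (no internal vertex is `s` or `t`,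
which is automatic as the vertices of a path are distinct). -/
structure STPath (G : Multigraph V E) (s t : V) : Type (max u v) where
  walk : G.Walk s t
  support_nodup : walk.support.Nodup

/-- A system of pairwise edge-disjoint `st`-paths. -/
def STPathDisjoint (G : Multigraph V E) {s t : V} (P : Set (G.STPath s t)) : Prop :=
  ∀ p ∈ P, ∀ q ∈ P, p ≠ q → ∀ e, e ∈ p.walk.edges → e ∉ q.walk.edges

/-- A nontrivial path starting at `s`. -/
structure SPath (G : Multigraph V E) (s : V) : Type (max u v) where
  last : V
  walk : G.Walk s last
  support_nodup : walk.support.Nodup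
  edges_ne_nil : walk.edges ≠ []

/-- A system of pairwise edge-disjoint paths starting at `s`. -/
def SPathDisjoint (G : Multigraph V E) {s : V} (W : Set (G.SPath s)) : Prop :=
  ∀ p ∈ W, ∀ q ∈ W, p ≠ q → ∀ e, e ∈ p.walk.edges → e ∉ q.walk.edges

/-- The set of last edges of a system of paths starting at `s`. -/
def lastEdges (G : Multigraph V E) {s : V} (W : Set (G.SPath s)) : Set E :=
  {e | ∃ p ∈ W, p.walk.edges.getLast? = some e}

/-- `C` is a cut separating `A` from `B`. -/
def SepCut (G : Multigraph V E) (A B : Set V) (C : Set E) : Prop :=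
  ∃ X : Set V, A ⊆ X ∧ (∀ b ∈ B, b ∉ X) ∧ C = G.cut X

/-- `C` is a `⊆`-minimal cut separating `A` from `B`. -/
def IsMinSepCut (G : Multigraph V E) (A B : Set V) (C : Set E) : Prop :=
  G.SepCut A B C ∧ ∀ D : Set E, G.SepCut A B D → D ⊆ C → D = C

/-- An `s`-`B`-wave: a system of pairwise edge-disjoint paths starting at `s`
whose set of last edges is a `⊆`-minimal cut separating `s` from `B`. -/
def IsWave (G : Multigraph V E) (s : V) (B : Set V) (W : Set (G.SPath s)) : Prop :=
  G.SPathDisjoint W ∧ G.IsMinSepCut {s} B (G.lastEdges W)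

/-- An Erdős–Menger `st`-cut: an `st`-cut which is orthogonal to some system of
pairwise edge-disjoint `st`-paths, i.e. it consists of exactly one edge chosen
from each path of the system. -/
def IsEMCut (G : Multigraph V E) (s t : V) (C : Set E) : Prop :=
  (∃ X : Set V, s ∈ X ∧ t ∉ X ∧ C = G.cut X) ∧
  ∃ P : Set (G.STPath s t), G.STPathDisjoint P ∧
    (∀ p ∈ P, ∃! e, e ∈ C ∧ e ∈ p.walk.edges) ∧
    (∀ e ∈ C, ∃ p ∈ P, e ∈ p.walk.edges)

/-- The order `≼` on `st`-cuts: the `s`-side of `C` is contained in the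
`s`-side of `D` (in a connected graph the `s`-side is unique). -/
def CutLE (G : Multigraph V E) (s t : V) (C D : Set E) : Prop :=
  ∃ X Y : Set V, s ∈ X ∧ t ∉ X ∧ C = G.cut X ∧ s ∈ Y ∧ t ∉ Y ∧ D = G.cut Y ∧ X ⊆ Y

/-- A cut of the form `C_W` for some `st`-wave `W`. -/
def IsWaveCut (G : Multigraph V E) (s t : V) (C : Set E) : Prop :=
  ∃ W : Set (G.SPath s), G.IsWave s {t} W ∧ G.lastEdges W = C

/-- Deletion of a set of edges. -/
def deleteEdges (G : Multigraph V E) (F : Set E) : Multigraph V {e : E // e ∉ F} where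
  inc e := G.inc e.1
  not_isDiag e := G.not_isDiag e.1

open Classical in
/-- Contraction of the vertex set `X` to the vertex `s` (edges inside `X` are
deleted, edges leaving `X` are redirected to `s`). -/
noncomputable def contract (G : Multigraph V E) (X : Set V) (s : V) :
    Multigraph V {e : E // ¬ (Sym2.map (fun v => if v ∈ X then s else v) (G.inc e)).IsDiag} where
  inc e := Sym2.map (fun v => if v ∈ X then s else v) (G.inc e.1)
  not_isDiag e := e.2

/-- Reachability inside a set `S` of vertices. -/
def ReachableIn (G : Multigraph V E) (S : Set V) (x y : V) : Prop :=
  ∃ p : G.Walk x y, ∀ z ∈ p.support, z ∈ S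

/-- `Y` is (the vertex set of) a connected component of the subgraph of `G`
induced by `S`. -/
def IsComponentOf (G : Multigraph V E) (Y S : Set V) : Prop :=
  Y.Nonempty ∧ Y ⊆ S ∧ ∀ x ∈ Y, ∀ y ∈ S, (G.ReachableIn S x y ↔ y ∈ Y)

/-- A cycle in a multigraph (a closed walk with distinct edges whose
vertices are distinct except that the first one equals the last one). -/
structure Cycle (G : Multigraph V E) : Type (max u v) where
  base : V
  walk : G.Walk base base
  edges_ne_nil : walk.edges ≠ []
  edges_nodup : walk.edges.Nodup
  support_tail_nodup : walk.support.tail.Nodup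

/-- A graph is Eulerian if its edge set can be partitioned into
edge sets of cycles. -/
def IsEulerian (G : Multigraph V E) : Prop :=
  ∃ C : Set G.Cycle,
    (∀ c ∈ C, ∀ d ∈ C, c ≠ d → ∀ e, e ∈ c.walk.edges → e ∉ d.walk.edges) ∧
    ∀ e : E, ∃ c ∈ C, e ∈ c.walk.edges

/-- A `T`-partition: a family `{A t : t ∈ T}` of pairwise disjoint vertex sets
with `A t ∩ T = {t}`. -/
def IsTPartition (T : Set V) (A : V → Set V) : Prop :=
  (∀ t ∈ T, A t ∩ T = {t}) ∧
  ∀ t₁ ∈ T, ∀ t₂ ∈ T, t₁ ≠ t₂ → Disjoint (A t₁) (A t₂)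

end Multigraph

/-!
Call a system of edge-disjoint walks from `s` that stop on leaving `X`, one through each edge of the
cut of `X`, a linkage with side `X`. If `X` and `Y` are sides of linkages, so is `X ∪ Y`: continue
each walk out of `X` along the final segment, outside `X`, of a walk out of `Y`. Sides are also
closed under unions of chains of compatible linkages, so by Zorn's lemma there is a largest side
avoiding `B`. Its cut is minimal, as the side of a smaller cut could be joined to it.

A path from `s` to `B` has to leave the largest side. A stable matching between the given paths and
the walks of the linkage, where the paths prefer to switch early and the walks to be joined late,
reroutes the paths so that together with the unmatched walks they still end in the whole cut, and
their first edges survive. Erasing loops turns the resulting walks into paths.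
-/

namespace Multigraph

variable {V : Type u} {E : Type v} {G : Multigraph V E} {s u v : V} {B X Y : Set V}
  {l : List E} {e : E}

theorem mem_cut_iff_of_inc_eq (he : G.inc e = s(u, v)) :
    e ∈ G.cut X ↔ (u ∈ X ∧ v ∉ X) ∨ (v ∈ X ∧ u ∉ X) := by
  constructor
  · rintro ⟨a, b, hab, ha, hb⟩
    rcases Sym2.eq_iff.1 (he.symm.trans hab) with ⟨rfl, rfl⟩ | ⟨rfl, rfl⟩
    exacts [Or.inl ⟨ha, hb⟩, Or.inr ⟨ha, hb⟩]
  · rintro (⟨hu, hv⟩ | ⟨hv, hu⟩)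
    exacts [⟨u, v, he, hu, hv⟩, ⟨v, u, he.trans Sym2.eq_swap, hv, hu⟩]

/-- The edges with at least one end-vertex in `X`; this is `inci` for a set of vertices. -/
def incident (G : Multigraph V E) (X : Set V) : Set E := {e | ∃ z ∈ G.inc e, z ∈ X}

theorem incident_mono (hXY : X ⊆ Y) : G.incident X ⊆ G.incident Y :=
  fun _ ⟨z, hz, hzX⟩ => ⟨z, hz, hXY hzX⟩

theorem cut_subset_incident : G.cut X ⊆ G.incident X :=
  fun _ ⟨x, _, he, hx, _⟩ => ⟨x, by simp [he], hx⟩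

theorem mem_cut_of_mem_incident (he : e ∈ G.incident X) (hv : v ∈ G.inc e) (hvX : v ∉ X) :
    e ∈ G.cut X := by
  obtain ⟨z, hz, hzX⟩ := he
  exact ⟨z, v, (Sym2.mem_and_mem_iff fun h : z = v => hvX (h ▸ hzX)).1 ⟨hz, hv⟩, hzX, hvX⟩

theorem mem_cut_of_subset (hXY : X ⊆ Y) (hX : e ∈ G.incident X) (he : e ∈ G.cut Y) :
    e ∈ G.cut X := by
  obtain ⟨x, y, hxy, -, hy⟩ := he
  exact mem_cut_of_mem_incident hX (by simp [hxy]) fun h => hy (hXY h)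

/-- `G.IsExitWalk X u l`: the list `l` consists of the edges of a walk that starts at `u` and
stops as soon as it is outside `X`. In particular `l = []` when `u ∉ X`. Walks are handled through
their edge lists, so that cutting and rejoining them does not involve the dependent type `Walk`. -/
inductive IsExitWalk (G : Multigraph V E) (X : Set V) : V → List E → Prop
  | nil {u : V} (hu : u ∉ X) : G.IsExitWalk X u []
  | cons {u v : V} {e : E} {l : List E} (hu : u ∈ X) (he : G.inc e = s(u, v))
      (hl : G.IsExitWalk X v l) : G.IsExitWalk X u (e :: l)

theorem isExitWalk_cons_iff (he : G.inc e = s(u, v)) :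
    G.IsExitWalk X u (e :: l) ↔ u ∈ X ∧ G.IsExitWalk X v l := by
  refine ⟨?_, fun ⟨hu, hl⟩ => .cons hu he hl⟩
  rintro (_ | ⟨hu, he', hl⟩)
  obtain rfl := Sym2.congr_right.1 (he.symm.trans he')
  exact ⟨hu, hl⟩

namespace IsExitWalk

theorem eq_nil (h : G.IsExitWalk X u l) (hu : u ∉ X) : l = [] := by
  cases h with
  | nil => rfl
  | cons hu' => exact absurd hu' hu

theorem ne_nil (h : G.IsExitWalk X u l) (hu : u ∈ X) : l ≠ [] := by
  cases h with
  | nil hu' => exact absurd hu hu'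
  | cons => simp

theorem exists_cons (h : G.IsExitWalk X u l) (hu : u ∈ X) :
    ∃ e k v, l = e :: k ∧ G.inc e = s(u, v) ∧ G.IsExitWalk X v k := by
  cases h with
  | nil hu' => exact absurd hu hu'
  | cons _ he hk => exact ⟨_, _, _, rfl, he, hk⟩

theorem mem_incident (h : G.IsExitWalk X u l) (he : e ∈ l) : e ∈ G.incident X := by
  induction h with
  | nil => simp at he
  | cons hu hinc _ ih =>
    rcases List.mem_cons.1 he with rfl | he
    exacts [⟨_, by simp [hinc], hu⟩, ih he]

theorem mem_getLast?_iff (h : G.IsExitWalk X u l) : e ∈ l.getLast? ↔ e ∈ l ∧ e ∈ G.cut X := by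
  induction h with
  | nil => simp
  | @cons u v f l hu hf hl ih =>
    by_cases hv : v ∈ X
    · have hfX : f ∉ G.cut X := by simp [mem_cut_iff_of_inc_eq hf, hu, hv]
      rw [List.getLast?_cons_of_ne_nil (hl.ne_nil hv), ih, List.mem_cons]
      grind
    · have hfX : f ∈ G.cut X := ⟨u, v, hf, hu, hv⟩
      obtain rfl := hl.eq_nil hv
      grind

theorem mem_cut_of_mem_getLast? (h : G.IsExitWalk X u l) (he : e ∈ l.getLast?) : e ∈ G.cut X :=
  (h.mem_getLast?_iff.1 he).2

theorem eq_of_mem_cut {f : E} (h : G.IsExitWalk X u l) (he : e ∈ l) (heX : e ∈ G.cut X)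
    (hf : f ∈ l) (hfX : f ∈ G.cut X) : e = f :=
  Option.mem_unique (h.mem_getLast?_iff.2 ⟨he, heX⟩) (h.mem_getLast?_iff.2 ⟨hf, hfX⟩)

theorem exists_mem_cut_of_subset (h : G.IsExitWalk X u l) (hu : u ∈ Y) (hYX : Y ⊆ X) :
    ∃ e ∈ l, e ∈ G.cut Y := by
  induction h with
  | nil hu' => exact absurd (hYX hu) hu'
  | @cons u v e l _ he _ ih =>
    by_cases hv : v ∈ Y
    · obtain ⟨f, hf, hfY⟩ := ih hv
      exact ⟨f, List.mem_cons_of_mem _ hf, hfY⟩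
    · exact ⟨e, List.mem_cons_self, u, v, he, hu, hv⟩

theorem append {d : List E} (h : G.IsExitWalk X u l) (hXY : X ⊆ Y) (he : e ∈ l.getLast?)
    (hv : v ∈ G.inc e) (hvX : v ∉ X) (hd : G.IsExitWalk Y v d) : G.IsExitWalk Y u (l ++ d) := by
  induction h with
  | nil => simp at he
  | @cons a b f l ha hf hl ih =>
    refine .cons (hXY ha) hf ?_
    by_cases hb : b ∈ X
    · exact ih (by rwa [List.getLast?_cons_of_ne_nil (hl.ne_nil hb)] at he)
    · obtain rfl := hl.eq_nil hb
      obtain rfl : f = e := by simpa using he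
      rcases Sym2.mem_iff.1 (hf ▸ hv) with rfl | rfl
      exacts [absurd ha hvX, hd]

theorem mono (h : G.IsExitWalk X u l) (hXY : X ⊆ Y) (he : e ∈ l) (heY : e ∈ G.cut Y) :
    G.IsExitWalk Y u l := by
  have heX := mem_cut_of_subset hXY (h.mem_incident he) heY
  obtain ⟨a, b, hab, -, hb⟩ := heY
  simpa using h.append hXY (h.mem_getLast?_iff.2 ⟨he, heX⟩) (by simp [hab])
    (fun hbX => hb (hXY hbX)) (.nil hb)

theorem exists_split_append {a b : List E} (h : G.IsExitWalk X u (a ++ b)) :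
    ∃ v, G.IsExitWalk X v b ∧ ∀ c, G.IsExitWalk X v c → G.IsExitWalk X u (a ++ c) := by
  induction a generalizing u with
  | nil => exact ⟨u, h, fun _ hc => hc⟩
  | cons e a ih =>
    cases h with
    | cons hu he h =>
      obtain ⟨v, hb, hsplit⟩ := ih h
      exact ⟨v, hb, fun c hc => .cons hu he (hsplit c hc)⟩

/-- The two walks may traverse the common edge `m` in opposite directions, in which case `m` is
skipped. -/
theorem splice {a b c d : List E} {m : E} (h₁ : G.IsExitWalk X u (a ++ m :: b))
    (h₂ : G.IsExitWalk X v (c ++ m :: d)) :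
    G.IsExitWalk X u (a ++ m :: d) ∨ d ≠ [] ∧ G.IsExitWalk X u (a ++ d) := by
  obtain ⟨p, hp, hreplace⟩ := h₁.exists_split_append
  obtain ⟨q, hq, -⟩ := h₂.exists_split_append
  cases hp with
  | @cons _ p' _ _ hpX hm _ =>
    cases hq with
    | @cons _ q' _ _ _ hm' hd =>
      rcases Sym2.eq_iff.1 (hm.symm.trans hm') with ⟨rfl, rfl⟩ | ⟨rfl, rfl⟩
      · exact Or.inl (hreplace _ (.cons hpX hm' hd))
      · exact Or.inr ⟨hd.ne_nil hpX, hreplace _ hd⟩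

end IsExitWalk

/-- Edge lists of the walks that make up a linkage from `s` to the cut of `X`: they exit `X` with
their last edge and do not return to `s`, so only their first edge is incident with `s`. -/
structure IsLink (G : Multigraph V E) (s : V) (X : Set V) (l : List E) : Prop where
  isExitWalk : G.IsExitWalk X s l
  notMem_inc_of_mem_tail : ∀ e ∈ l.tail, s ∉ G.inc e

namespace IsLink

theorem exists_cons (h : G.IsLink s X l) (hs : s ∈ X) : ∃ e k, l = e :: k ∧ s ∈ G.inc e := by
  obtain ⟨e, k, v, rfl, he, -⟩ := h.isExitWalk.exists_cons hs
  exact ⟨e, k, rfl, by simp [he]⟩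

theorem splice {a b c d : List E} {m : E} (hs : s ∈ X) (h₁ : G.IsLink s X (a ++ m :: b))
    (h₂ : G.IsLink s X (c ++ m :: d)) :
    ∃ l, G.IsLink s X l ∧ l.head? = (a ++ m :: b).head? ∧ l.getLast? = (c ++ m :: d).getLast? ∧
      ∀ f ∈ l, f ∈ a ∨ f = m ∨ f ∈ d := by
  cases a with
  | nil =>
    have hsm : s ∈ G.inc m := by
      obtain ⟨e, k, hek, hse⟩ := h₁.exists_cons hs
      grind
    cases c with
    | nil => exact ⟨m :: d, h₂, by simp⟩
    | cons c₀ c => exact absurd hsm (h₂.notMem_inc_of_mem_tail m (by simp))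
  | cons a₀ a =>
    have hd : ∀ f ∈ d, s ∉ G.inc f := fun f hf => h₂.notMem_inc_of_mem_tail f (by grind)
    have ha : ∀ f ∈ a ++ m :: b, s ∉ G.inc f := h₁.notMem_inc_of_mem_tail
    rcases h₁.isExitWalk.splice h₂.isExitWalk with h | ⟨hne, h⟩
    · exact ⟨_, ⟨h, by grind⟩, by simp, by simp only [List.getLast?_append_cons], by grind⟩
    · refine ⟨_, ⟨h, by grind⟩, by simp, ?_, by grind⟩
      rw [List.getLast?_append_of_ne_nil _ hne, List.getLast?_append_cons,
        List.getLast?_cons_of_ne_nil hne]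

end IsLink

section StableMatching

variable {α ι κ β γ : Type*}

/-- `M` is a stable matching in the bipartite multigraph with edge type `α`, where `e` joins
`left e : ι` to `right e : κ` and both sides prefer edges of smaller rank. -/
structure IsStableMatching [LE β] [LE γ] (left : α → ι) (right : α → κ) (leftRank : α → β)
    (rightRank : α → γ) (M : Set α) : Prop where
  injOn_left : Set.InjOn left M
  injOn_right : Set.InjOn right M
  stable : ∀ e, (∃ m ∈ M, left m = left e ∧ leftRank m ≤ leftRank e) ∨
    ∃ m ∈ M, right m = right e ∧ rightRank m ≤ rightRank e

/-- The Gale–Shapley theorem without finiteness. Instead of running the proposal algorithm, one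
takes a fixed point: an edge is proposed once all edges its left end prefers are rejected, and it is
rejected when its right end is proposed an edge it prefers. The matching consists of the edges that
are proposed but not rejected. -/
theorem exists_isStableMatching [LinearOrder β] [LinearOrder γ] [WellFoundedLT β]
    [WellFoundedLT γ] {left : α → ι} {right : α → κ} {leftRank : α → β} {rightRank : α → γ}
    (hleft : ∀ e f, left e = left f → leftRank e = leftRank f → e = f)
    (hright : ∀ e f, right e = right f → rightRank e = rightRank f → e = f) :
    ∃ M, IsStableMatching left right leftRank rightRank M := by
  let proposed (R : Set α) : Set α := {e | ∀ f, left f = left e → leftRank f < leftRank e → f ∈ R}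
  let reject : Set α →o Set α :=
    ⟨fun R => {e | ∃ f ∈ proposed R, right f = right e ∧ rightRank f < rightRank e},
      fun R R' hR e ⟨f, hf, hfe⟩ => ⟨f, fun g hg hgf => hR (hf g hg hgf), hfe⟩⟩
  let R := reject.lfp
  have mem_R {e} : e ∈ R ↔ ∃ f ∈ proposed R, right f = right e ∧ rightRank f < rightRank e :=
    Set.ext_iff.1 reject.map_lfp.symm e
  refine ⟨proposed R \ R, ?_, ?_, fun e => ?_⟩
  · rintro e ⟨he, heR⟩ f ⟨hf, hfR⟩ hef
    rcases lt_trichotomy (leftRank e) (leftRank f) with h | h | h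
    exacts [absurd (hf e hef h) heR, hleft e f hef h, absurd (he f hef.symm h) hfR]
  · rintro e ⟨he, heR⟩ f ⟨hf, hfR⟩ hef
    rcases lt_trichotomy (rightRank e) (rightRank f) with h | h | h
    exacts [absurd (mem_R.2 ⟨e, he, hef, h⟩) hfR, hright e f hef h,
      absurd (mem_R.2 ⟨f, hf, hef.symm, h⟩) heR]
  · by_cases heR : e ∈ R
    · obtain ⟨f, ⟨hf, hfe, hlt⟩, hmin⟩ :=
        (wellFounded_lt.onFun (f := rightRank)).has_min _ (mem_R.1 heR)
      refine Or.inr ⟨f, ⟨hf, fun hfR => ?_⟩, hfe, hlt.le⟩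
      obtain ⟨g, hg, hgf, hglt⟩ := mem_R.1 hfR
      exact hmin g ⟨hg, hgf.trans hfe, hglt.trans hlt⟩ hglt
    · obtain ⟨f, ⟨hfR, hfe, hle⟩, hmin⟩ := (wellFounded_lt.onFun (f := leftRank)).has_min
        {f | f ∉ R ∧ left f = left e ∧ leftRank f ≤ leftRank e} ⟨e, heR, rfl, le_rfl⟩
      refine Or.inl ⟨f, ⟨fun g hgf hglt => ?_, hfR⟩, hfe, hle⟩
      by_contra hgR
      exact hmin g ⟨hgR, hgf.trans hfe, hglt.le.trans hle⟩ hglt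

end StableMatching

section Crossing

theorem exists_eq_append_cons_forall_not (p : E → Prop) (h : ∃ e ∈ l, p e) :
    ∃ c e d, l = c ++ e :: d ∧ p e ∧ ∀ f ∈ d, ¬ p f := by
  induction l with
  | nil => simp at h
  | cons a l ih =>
    by_cases hl : ∃ e ∈ l, p e
    · obtain ⟨c, e, d, rfl, he, hd⟩ := ih hl
      exact ⟨a :: c, e, d, rfl, he, hd⟩
    · exact ⟨[], a, l, rfl, by grind, by simpa using hl⟩

theorem append_cons_inj_of_forall_not {p : E → Prop} {c d c' d' : List E} {e' : E}
    (h : c ++ e :: d = c' ++ e' :: d') (he : p e) (he' : p e') (hd : ∀ f ∈ d, ¬ p f)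
    (hd' : ∀ f ∈ d', ¬ p f) : e = e' ∧ d = d' := by
  rcases List.append_eq_append_iff.1 h with ⟨a, rfl, ha⟩ | ⟨a, rfl, ha⟩ <;> cases a <;> grind

variable [DecidableEq E]

theorem exists_eq_append_cons_idxOf_le {m : E} (hm : m ∈ l) :
    ∃ a b, l = a ++ m :: b ∧ ∀ f ∈ a, l.idxOf f ≤ l.idxOf m := by
  obtain ⟨a, b, rfl, hma⟩ := List.eq_append_cons_of_mem hm
  refine ⟨a, b, rfl, fun f hf => ?_⟩
  rw [List.idxOf_append_of_mem hf, List.idxOf_append_of_notMem hma]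
  exact (List.idxOf_lt_length_of_mem hf).le.trans (Nat.le_add_right _ _)

theorem exists_eq_append_cons_idxOf_reverse_le {m : E} (hm : m ∈ l) :
    ∃ c d, l = c ++ m :: d ∧ ∀ f ∈ d, l.reverse.idxOf f ≤ l.reverse.idxOf m := by
  obtain ⟨a, b, hl, ha⟩ := exists_eq_append_cons_idxOf_le (List.mem_reverse.2 hm)
  exact ⟨b.reverse, a.reverse, by simpa using congrArg List.reverse hl,
    fun f hf => ha f (List.mem_reverse.1 hf)⟩

/-- An edge at which a member of `P` and a member of `F` meet. The crossings are the edges of the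
bipartite multigraph between `P` and `F` in which a stable matching tells each member of `P` where
to switch to a member of `F`. -/
@[ext]
structure Crossing (P F : Set (List E)) where
  left : List E
  right : List E
  edge : E
  left_mem : left ∈ P
  right_mem : right ∈ F
  edge_mem_left : edge ∈ left
  edge_mem_right : edge ∈ right

namespace Crossing

variable {P F : Set (List E)} {M : Set (Crossing P F)}

/-- The members of `P` prefer to switch early. -/
def leftRank (m : Crossing P F) : ℕ := m.left.idxOf m.edge

/-- The members of `F` prefer to be joined late. -/
def rightRank (m : Crossing P F) : ℕ := m.right.reverse.idxOf m.edge

theorem eq_of_left_eq (hF : F.Pairwise List.Disjoint) {m n : Crossing P F}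
    (h : m.left = n.left) (hrank : m.leftRank = n.leftRank) : m = n := by
  have hedge : m.edge = n.edge :=
    (List.idxOf_inj m.edge_mem_left).1 (hrank.trans (by rw [leftRank, h]))
  exact Crossing.ext h
    (hF.eq m.right_mem n.right_mem fun hd => hd m.edge_mem_right (hedge ▸ n.edge_mem_right)) hedge

theorem eq_of_right_eq (hP : P.Pairwise List.Disjoint) {m n : Crossing P F}
    (h : m.right = n.right) (hrank : m.rightRank = n.rightRank) : m = n := by
  have hedge : m.edge = n.edge :=
    (List.idxOf_inj (List.mem_reverse.2 m.edge_mem_right)).1 (hrank.trans (by rw [rightRank, h]))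
  exact Crossing.ext
    (hP.eq m.left_mem n.left_mem fun hd => hd m.edge_mem_left (hedge ▸ n.edge_mem_left)) h hedge

/-- `f` lies on one of the two segments that remain when `m.left` switches to `m.right` at
`m.edge`. -/
def Uses (m : Crossing P F) (f : E) : Prop :=
  (f ∈ m.left ∧ m.left.idxOf f ≤ m.leftRank) ∨ (f ∈ m.right ∧ m.right.reverse.idxOf f ≤ m.rightRank)

theorem exists_isLink (hs : s ∈ X) (hP : ∀ l ∈ P, G.IsLink s X l) (hF : ∀ k ∈ F, G.IsLink s X k)
    (m : Crossing P F) :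
    ∃ l, G.IsLink s X l ∧ l.head? = m.left.head? ∧ l.getLast? = m.right.getLast? ∧
      ∀ f ∈ l, m.Uses f := by
  obtain ⟨a, b, hab, ha⟩ := exists_eq_append_cons_idxOf_le m.edge_mem_left
  obtain ⟨c, d, hcd, hd⟩ := exists_eq_append_cons_idxOf_reverse_le m.edge_mem_right
  obtain ⟨l, hl, hhead, hlast, hmem⟩ :=
    IsLink.splice hs (hab ▸ hP _ m.left_mem) (hcd ▸ hF _ m.right_mem)
  refine ⟨l, hl, hab ▸ hhead, hcd ▸ hlast, fun f hf => ?_⟩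
  rcases hmem f hf with hfa | rfl | hfd
  · exact Or.inl ⟨by simp [hab, hfa], ha f hfa⟩
  · exact Or.inl ⟨m.edge_mem_left, le_rfl⟩
  · exact Or.inr ⟨by simp [hcd, hfd], hd f hfd⟩

theorem exists_right_eq_of_mem_left (hF : F.Pairwise List.Disjoint)
    (hM : IsStableMatching left right leftRank rightRank M) {m : Crossing P F} (hm : m ∈ M) {f : E}
    (hf : f ∈ m.left) (hrank : m.left.idxOf f ≤ m.leftRank) {k : List E} (hk : k ∈ F)
    (hfk : f ∈ k) :
    ∃ n ∈ M, n.right = k ∧ n.rightRank ≤ k.reverse.idxOf f := by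
  let c : Crossing P F := ⟨m.left, k, f, m.left_mem, hk, hf, hfk⟩
  rcases hM.stable c with ⟨n, hn, hleft, hle⟩ | hn
  · obtain rfl := hM.injOn_left hn hm hleft
    have hnc : n = c := eq_of_left_eq hF rfl (hle.antisymm hrank)
    exact ⟨c, hnc ▸ hn, rfl, le_rfl⟩
  · exact hn

theorem eq_of_mem_left_of_mem_right (hP : P.Pairwise List.Disjoint)
    (hF : F.Pairwise List.Disjoint) (hM : IsStableMatching left right leftRank rightRank M)
    {m n : Crossing P F} (hm : m ∈ M) (hn : n ∈ M) {f : E} (hfm : f ∈ m.left)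
    (hmrank : m.left.idxOf f ≤ m.leftRank) (hfn : f ∈ n.right)
    (hnrank : n.right.reverse.idxOf f ≤ n.rightRank) : m = n := by
  obtain ⟨n', hn', hright, hle⟩ :=
    exists_right_eq_of_mem_left hF hM hm hfm hmrank n.right_mem hfn
  obtain rfl := hM.injOn_right hn' hn hright
  obtain rfl : f = n'.edge :=
    (List.idxOf_inj (List.mem_reverse.2 hfn)).1 (hnrank.antisymm hle)
  exact hM.injOn_left hm hn
    (hP.eq m.left_mem n'.left_mem fun hd => hd hfm n'.edge_mem_left)

theorem eq_of_uses (hP : P.Pairwise List.Disjoint) (hF : F.Pairwise List.Disjoint)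
    (hM : IsStableMatching left right leftRank rightRank M) {m n : Crossing P F} (hm : m ∈ M)
    (hn : n ∈ M) {f : E} (hfm : m.Uses f) (hfn : n.Uses f) : m = n := by
  rcases hfm with ⟨hfm, hmrank⟩ | ⟨hfm, hmrank⟩ <;> rcases hfn with ⟨hfn, hnrank⟩ | ⟨hfn, hnrank⟩
  · exact hM.injOn_left hm hn (hP.eq m.left_mem n.left_mem fun hd => hd hfm hfn)
  · exact eq_of_mem_left_of_mem_right hP hF hM hm hn hfm hmrank hfn hnrank
  · exact (eq_of_mem_left_of_mem_right hP hF hM hn hm hfn hnrank hfm hmrank).symm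
  · exact hM.injOn_right hm hn (hF.eq m.right_mem n.right_mem fun hd => hd hfm hfn)

theorem exists_right_eq_of_uses (hF : F.Pairwise List.Disjoint)
    (hM : IsStableMatching left right leftRank rightRank M) {m : Crossing P F} (hm : m ∈ M) {f : E}
    (hfm : m.Uses f) {k : List E} (hk : k ∈ F) (hfk : f ∈ k) : ∃ n ∈ M, n.right = k := by
  rcases hfm with ⟨hfm, hrank⟩ | ⟨hfm, -⟩
  · obtain ⟨n, hn, hright, -⟩ := exists_right_eq_of_mem_left hF hM hm hfm hrank hk hfk
    exact ⟨n, hn, hright⟩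
  · exact ⟨m, hm, hF.eq m.right_mem hk fun hd => hd hfm hfk⟩

theorem exists_left_eq (hP : P.Pairwise List.Disjoint)
    (hM : IsStableMatching left right leftRank rightRank M) {l k : List E} (hl : l ∈ P)
    (hk : k ∈ F) (hel : e ∈ l) (hek : e ∈ k.getLast?) : ∃ m ∈ M, m.left = l := by
  let c : Crossing P F := ⟨l, k, e, hl, hk, hel, List.mem_of_mem_getLast? hek⟩
  rcases hM.stable c with ⟨m, hm, hleft, -⟩ | ⟨m, hm, hright, hle⟩
  · exact ⟨m, hm, hleft⟩
  · have hc : c.rightRank = 0 := by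
      obtain ⟨k', rfl⟩ := List.getLast?_eq_some_iff.1 hek
      simp [c, rightRank]
    have hmc : m = c := eq_of_right_eq hP hright (by omega)
    exact ⟨m, hm, by rw [hmc]⟩

theorem pairwise_disjoint_reroute (hP : P.Pairwise List.Disjoint) (hF : F.Pairwise List.Disjoint)
    (hM : IsStableMatching left right leftRank rightRank M) {g : Crossing P F → List E}
    (hg : ∀ m, ∀ f ∈ g m, m.Uses f) :
    (g '' M ∪ F \ right '' M).Pairwise List.Disjoint := by
  rintro _ (⟨m, hm, rfl⟩ | ⟨hl, hlM⟩) _ (⟨n, hn, rfl⟩ | ⟨hk, hkM⟩) hne f hfl hfk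
  · exact hne (congrArg g (eq_of_uses hP hF hM hm hn (hg m f hfl) (hg n f hfk)))
  · exact hkM (exists_right_eq_of_uses hF hM hm (hg m f hfl) hk hfk)
  · exact hlM (exists_right_eq_of_uses hF hM hn (hg n f hfk) hl hfl)
  · exact hF hl hk hne hfl hfk

end Crossing

end Crossing

/-- A system of pairwise disjoint links from `s` that ends in every edge of the cut of its side.
Linkages are waves without the minimality of the cut, and with walks instead of paths. -/
structure Linkage (G : Multigraph V E) (s : V) where
  side : Set V
  walks : Set (List E)
  mem_side : s ∈ side
  isLink : ∀ l ∈ walks, G.IsLink s side l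
  disjoint : walks.Pairwise List.Disjoint
  cover : ∀ e ∈ G.cut side, ∃ l ∈ walks, e ∈ l

namespace Linkage

theorem exists_mem_getLast? (L : G.Linkage s) (he : e ∈ G.cut L.side) :
    ∃ l ∈ L.walks, e ∈ l.getLast? := by
  obtain ⟨l, hl, hel⟩ := L.cover e he
  exact ⟨l, hl, (L.isLink l hl).isExitWalk.mem_getLast?_iff.2 ⟨hel, he⟩⟩

/-- Pym's linkage theorem, for edge-disjoint walks with a common starting vertex. -/
theorem exists_head?_eq (L : G.Linkage s) {P : Set (List E)} (hP : ∀ l ∈ P, G.IsLink s L.side l)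
    (hPd : P.Pairwise List.Disjoint) :
    ∃ L' : G.Linkage s, L'.side = L.side ∧ ∀ l ∈ P, ∃ k ∈ L'.walks, k.head? = l.head? := by
  classical
  obtain ⟨M, hM⟩ := exists_isStableMatching (fun _ _ => Crossing.eq_of_left_eq L.disjoint)
    (fun _ _ => Crossing.eq_of_right_eq hPd)
  choose g hg hhead hlast hmem using Crossing.exists_isLink L.mem_side hP L.isLink
  have hcover : ∀ e ∈ G.cut L.side,
      ∃ l ∈ g '' M ∪ L.walks \ Crossing.right '' M, e ∈ l := by
    intro e he
    obtain ⟨k, hk, hek⟩ := L.exists_mem_getLast? he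
    by_cases hkM : k ∈ Crossing.right '' M
    · obtain ⟨m, hm, rfl⟩ := hkM
      exact ⟨g m, .inl ⟨m, hm, rfl⟩, List.mem_of_mem_getLast? (hlast m ▸ hek)⟩
    · exact ⟨k, .inr ⟨hk, hkM⟩, List.mem_of_mem_getLast? hek⟩
  refine ⟨⟨L.side, _, L.mem_side, ?_, Crossing.pairwise_disjoint_reroute hPd L.disjoint hM hmem,
    hcover⟩, rfl, fun l hl => ?_⟩
  · rintro _ (⟨m, -, rfl⟩ | ⟨hk, -⟩)
    exacts [hg m, L.isLink _ hk]
  · obtain ⟨e, hel, he⟩ := (hP l hl).isExitWalk.exists_mem_cut_of_subset L.mem_side subset_rfl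
    obtain ⟨k, hk, hek⟩ := L.exists_mem_getLast? he
    obtain ⟨m, hm, rfl⟩ := Crossing.exists_left_eq hPd hM hl hk hel hek
    exact ⟨g m, .inl ⟨m, hm, rfl⟩, hhead m⟩

/-- `L ≤ L'` if `L'` arises from `L` by enlarging the side, where the walks of `L` that end in the
new cut are kept. -/
instance : Preorder (G.Linkage s) where
  le L L' := L.side ⊆ L'.side ∧ ∀ l ∈ L.walks, (∃ e ∈ l, e ∈ G.cut L'.side) → l ∈ L'.walks
  le_refl _ := ⟨subset_rfl, fun _ hl _ => hl⟩
  le_trans L L' L'' h h' := by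
    refine ⟨h.1.trans h'.1, fun l hl ⟨e, hel, he⟩ => h'.2 l (h.2 l hl ⟨e, hel, ?_⟩) ⟨e, hel, he⟩⟩
    exact mem_cut_of_subset h'.1
      (incident_mono h.1 ((L.isLink l hl).isExitWalk.mem_incident hel)) he

theorem side_subset {L L' : G.Linkage s} (h : L ≤ L') : L.side ⊆ L'.side := h.1

theorem mem_walks_of_le {L L' : G.Linkage s} (h : L ≤ L') (hY : L'.side ⊆ Y) (hl : l ∈ L.walks)
    (hel : e ∈ l) (he : e ∈ G.cut Y) : l ∈ L'.walks :=
  h.2 l hl ⟨e, hel, mem_cut_of_subset hY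
    (incident_mono h.1 ((L.isLink l hl).isExitWalk.mem_incident hel)) he⟩

theorem isLink_of_subset (L : G.Linkage s) (hY : L.side ⊆ Y) (hl : l ∈ L.walks) (hel : e ∈ l)
    (he : e ∈ G.cut Y) : G.IsLink s Y l :=
  ⟨(L.isLink l hl).isExitWalk.mono hY hel he, (L.isLink l hl).notMem_inc_of_mem_tail⟩

/-- The linkage whose walks are the single edges at `s`. -/
def singleton (G : Multigraph V E) (s : V) : G.Linkage s where
  side := {s}
  walks := (fun e => [e]) '' G.cut {s}
  mem_side := rfl
  isLink := by
    rintro _ ⟨e, ⟨a, b, he, rfl, hb⟩, rfl⟩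
    exact ⟨.cons rfl he (.nil hb), by simp⟩
  disjoint := by
    rintro _ ⟨e, -, rfl⟩ _ ⟨f, -, rfl⟩ hef
    simpa [eq_comm] using hef
  cover e he := ⟨[e], ⟨e, he, rfl⟩, by simp⟩

theorem exists_upper_bound {c : Set (G.Linkage s)} (hc : IsChain (· ≤ ·) c) (hne : c.Nonempty) :
    ∃ K : G.Linkage s, K.side = ⋃ L ∈ c, L.side ∧ ∀ L ∈ c, L ≤ K := by
  let Y : Set V := ⋃ L ∈ c, L.side
  have hsub : ∀ L ∈ c, L.side ⊆ Y := fun L hL => Set.subset_biUnion_of_mem hL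
  obtain ⟨L₀, hL₀⟩ := hne
  refine ⟨⟨Y, {l | (∃ L ∈ c, l ∈ L.walks) ∧ ∃ e ∈ l, e ∈ G.cut Y}, hsub L₀ hL₀ L₀.mem_side,
    ?_, ?_, ?_⟩, rfl, fun L hL => ⟨hsub L hL, fun l hl hlY => ⟨⟨L, hL, hl⟩, hlY⟩⟩⟩
  · rintro l ⟨⟨L, hL, hl⟩, e, hel, he⟩
    exact L.isLink_of_subset (hsub L hL) hl hel he
  · rintro l ⟨⟨L, hL, hl⟩, e, hel, he⟩ k ⟨⟨L', hL', hk⟩, f, hfk, hf⟩ hne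
    rcases hc.total hL hL' with h | h
    · exact L'.disjoint (mem_walks_of_le h (hsub L' hL') hl hel he) hk hne
    · exact L.disjoint hl (mem_walks_of_le h (hsub L hL) hk hfk hf) hne
  · rintro e he
    obtain ⟨x, y, hxy, hx, hy⟩ := id he
    obtain ⟨L, hL, hxL⟩ := Set.mem_iUnion₂.1 hx
    obtain ⟨l, hl, hel⟩ := L.cover e ⟨x, y, hxy, hxL, fun h => hy (hsub L hL h)⟩
    exact ⟨l, ⟨⟨L, hL, hl⟩, e, hel, he⟩, hel⟩

theorem exists_side_eq_of_cut_subset (L : G.Linkage s) (hY : L.side ⊆ Y)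
    (hcut : G.cut Y ⊆ G.cut L.side) :
    ∃ K : G.Linkage s, K.side = Y := by
  refine ⟨⟨Y, {l ∈ L.walks | ∃ e ∈ l, e ∈ G.cut Y}, hY L.mem_side, ?_,
    L.disjoint.mono (Set.sep_subset _ _), fun e he => ?_⟩, rfl⟩
  · rintro l ⟨hl, e, hel, he⟩
    exact L.isLink_of_subset hY hl hel he
  · obtain ⟨l, hl, hel⟩ := L.cover e (hcut he)
    exact ⟨l, ⟨hl, e, hel, he⟩, hel⟩

/-- `d` leads from the edge `e` of the cut of `L.side` out of `L.side ∪ L'.side`: either `e` is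
already in the cut of the union, or `d` is what follows `e` on a walk of `L'` that meets `L.side`
with `e` for the last time. -/
def IsContinuation (L L' : G.Linkage s) (e : E) (d : List E) : Prop :=
  (d = [] ∧ e ∈ G.cut (L.side ∪ L'.side)) ∨
    (d ≠ [] ∧ (∃ c, c ++ e :: d ∈ L'.walks) ∧ ∀ f ∈ d, f ∉ G.incident L.side)

namespace IsContinuation

variable {L L' : G.Linkage s} {d d' : List E} {e' f : E}

theorem notMem_incident (h : L.IsContinuation L' e d) (hf : f ∈ d) : f ∉ G.incident L.side := by
  rcases h with ⟨rfl, -⟩ | ⟨-, -, hd⟩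
  exacts [absurd hf List.not_mem_nil, hd f hf]

theorem exists_isExitWalk (h : L.IsContinuation L' e d) :
    ∃ v ∈ G.inc e, v ∉ L.side ∧ G.IsExitWalk (L.side ∪ L'.side) v d := by
  rcases h with ⟨rfl, a, b, hab, -, hb⟩ | ⟨hne, ⟨c, hc⟩, hd⟩
  · exact ⟨b, by simp [hab], fun h => hb (.inl h), .nil hb⟩
  · obtain ⟨p, hp, -⟩ := (L'.isLink _ hc).isExitWalk.exists_split_append
    cases hp with
    | @cons _ v _ _ _ he hv =>
      have hvY : v ∈ L'.side := by
        by_contra hvY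
        exact hne (hv.eq_nil hvY)
      obtain ⟨f, k, w, rfl, hf, -⟩ := hv.exists_cons hvY
      obtain ⟨g, hg, hgY⟩ := hv.exists_mem_cut_of_subset hvY subset_rfl
      refine ⟨v, by simp [he], fun hvX => hd f (by simp) ⟨v, by simp [hf], hvX⟩, ?_⟩
      refine hv.mono Set.subset_union_right hg ?_
      obtain ⟨x, y, hxy, hx, hy⟩ := hgY
      exact ⟨x, y, hxy, .inr hx, fun h => h.elim (fun h => hd g hg ⟨y, by simp [hxy], h⟩) hy⟩

theorem eq_nil_iff (he : e ∈ G.cut L.side) (h : L.IsContinuation L' e d) :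
    d = [] ↔ e ∈ G.cut (L.side ∪ L'.side) := by
  obtain ⟨v, hv, hvX, hd⟩ := h.exists_isExitWalk
  obtain ⟨a, b, hab, ha, -⟩ := he
  obtain rfl : v = b := (Sym2.mem_iff.1 (hab ▸ hv)).resolve_left fun hva => hvX (hva ▸ ha)
  have hcut : e ∈ G.cut (L.side ∪ L'.side) ↔ v ∉ L.side ∪ L'.side := by
    simp [mem_cut_iff_of_inc_eq hab, ha]
  rw [hcut]
  exact ⟨fun hdn hvXY => hd.ne_nil hvXY hdn, hd.eq_nil⟩

theorem unique (he : e ∈ G.cut L.side) (h : L.IsContinuation L' e d)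
    (h' : L.IsContinuation L' e d') : d = d' := by
  by_cases heXY : e ∈ G.cut (L.side ∪ L'.side)
  · rw [(h.eq_nil_iff he).2 heXY, (h'.eq_nil_iff he).2 heXY]
  · obtain ⟨-, ⟨c, hc⟩, hd⟩ := h.resolve_left fun h => heXY h.2
    obtain ⟨-, ⟨c', hc'⟩, hd'⟩ := h'.resolve_left fun h => heXY h.2
    have hcc : c ++ e :: d = c' ++ e :: d' :=
      L'.disjoint.eq hc hc' fun hdisj => hdisj (a := e) (by simp) (by simp)
    exact (append_cons_inj_of_forall_not hcc (cut_subset_incident he) (cut_subset_incident he)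
      hd hd').2

theorem eq_of_mem (he : e ∈ G.cut L.side) (he' : e' ∈ G.cut L.side) (h : L.IsContinuation L' e d)
    (h' : L.IsContinuation L' e' d') (hf : f ∈ d) (hf' : f ∈ d') : e = e' := by
  obtain ⟨-, ⟨c, hc⟩, hd⟩ := h.resolve_left fun h => absurd hf (by simp [h.1])
  obtain ⟨-, ⟨c', hc'⟩, hd'⟩ := h'.resolve_left fun h => absurd hf' (by simp [h.1])
  have hcc : c ++ e :: d = c' ++ e' :: d' :=
    L'.disjoint.eq hc hc' fun hdisj => hdisj (a := f) (by simp [hf]) (by simp [hf'])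
  exact (append_cons_inj_of_forall_not hcc (cut_subset_incident he) (cut_subset_incident he')
    hd hd').1

end IsContinuation

theorem isLink_append_continuation {L L' : G.Linkage s} {d : List E} (hl : l ∈ L.walks)
    (he : e ∈ l.getLast?) (hd : L.IsContinuation L' e d) :
    G.IsLink s (L.side ∪ L'.side) (l ++ d) := by
  obtain ⟨v, hv, hvX, hexit⟩ := hd.exists_isExitWalk
  have hlink := L.isLink l hl
  refine ⟨hlink.isExitWalk.append Set.subset_union_left he hv hvX hexit, fun f hf hsf => ?_⟩
  rw [List.tail_append_of_ne_nil (List.ne_nil_of_mem (List.mem_of_mem_getLast? he))] at hf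
  rcases List.mem_append.1 hf with hf | hf
  · exact hlink.notMem_inc_of_mem_tail f hf hsf
  · exact hd.notMem_incident hf ⟨s, hsf, L.mem_side⟩

theorem pairwise_disjoint_continuations (L L' : G.Linkage s) :
    {k | ∃ l ∈ L.walks, ∃ e ∈ l.getLast?, ∃ d, L.IsContinuation L' e d ∧ k = l ++ d}.Pairwise
      List.Disjoint := by
  rintro _ ⟨l, hl, e, he, d, hd, rfl⟩ _ ⟨l', hl', e', he', d', hd', rfl⟩ hne f hf hf'
  have hecut := (L.isLink l hl).isExitWalk.mem_cut_of_mem_getLast? he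
  have hecut' := (L.isLink l' hl').isExitWalk.mem_cut_of_mem_getLast? he'
  suffices hll : l = l' by
    subst hll
    obtain rfl := Option.mem_unique he he'
    exact hne (congrArg (l ++ ·) (hd.unique hecut hd'))
  rcases List.mem_append.1 hf with hf | hf <;> rcases List.mem_append.1 hf' with hf' | hf'
  · exact L.disjoint.eq hl hl' fun h => h hf hf'
  · exact absurd ((L.isLink l hl).isExitWalk.mem_incident hf) (hd'.notMem_incident hf')
  · exact absurd ((L.isLink l' hl').isExitWalk.mem_incident hf') (hd.notMem_incident hf)
  · obtain rfl := hd.eq_of_mem hecut hecut' hd' hf hf'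
    exact L.disjoint.eq hl hl' fun h =>
      h (List.mem_of_mem_getLast? he) (List.mem_of_mem_getLast? he')

theorem exists_isContinuation_of_mem_cut_union {L L' : G.Linkage s}
    (he : e ∈ G.cut (L.side ∪ L'.side)) :
    ∃ f ∈ G.cut L.side, ∃ d, L.IsContinuation L' f d ∧ (e = f ∨ e ∈ d) := by
  by_cases heX : e ∈ G.incident L.side
  · exact ⟨e, mem_cut_of_subset Set.subset_union_left heX he, [], .inl ⟨rfl, he⟩, .inl rfl⟩
  · have heY : e ∈ G.cut L'.side := by
      obtain ⟨a, b, hab, ha, hb⟩ := he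
      exact ⟨a, b, hab, ha.resolve_left fun h => heX ⟨a, by simp [hab], h⟩, fun h => hb (.inr h)⟩
    obtain ⟨k, hk, hek⟩ := L'.exists_mem_getLast? heY
    have hkX : ∃ f ∈ k, f ∈ G.incident L.side := by
      obtain ⟨f, k', rfl, hf⟩ := (L'.isLink k hk).exists_cons L'.mem_side
      exact ⟨f, by simp, s, hf, L.mem_side⟩
    obtain ⟨c, f, d, rfl, hf, hd⟩ := exists_eq_append_cons_forall_not _ hkX
    have hed : e ∈ d := by
      rw [List.getLast?_append_cons] at hek
      exact (List.mem_cons.1 (List.mem_of_mem_getLast? hek)).resolve_left fun h => heX (h ▸ hf)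
    have hfd : L.IsContinuation L' f d := .inr ⟨List.ne_nil_of_mem hed, ⟨c, hk⟩, hd⟩
    obtain ⟨v, hv, hvX, -⟩ := hfd.exists_isExitWalk
    exact ⟨f, mem_cut_of_mem_incident hf hv hvX, d, hfd, .inr hed⟩

theorem exists_side_eq_union (L L' : G.Linkage s) :
    ∃ K : G.Linkage s, K.side = L.side ∪ L'.side ∧ L ≤ K := by
  refine ⟨⟨L.side ∪ L'.side, _, .inl L.mem_side, ?_, pairwise_disjoint_continuations L L', ?_⟩,
    rfl, Set.subset_union_left, ?_⟩
  · rintro _ ⟨l, hl, e, he, d, hd, rfl⟩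
    exact isLink_append_continuation hl he hd
  · intro e he
    obtain ⟨f, hf, d, hd, hed⟩ := exists_isContinuation_of_mem_cut_union he
    obtain ⟨l, hl, hfl⟩ := L.exists_mem_getLast? hf
    refine ⟨l ++ d, ⟨l, hl, f, hfl, d, hd, rfl⟩, ?_⟩
    rcases hed with rfl | hed
    exacts [by simp [List.mem_of_mem_getLast? hfl], by simp [hed]]
  · rintro l hl ⟨e, hel, he⟩
    have hexit := (L.isLink l hl).isExitWalk
    have heX := mem_cut_of_subset Set.subset_union_left (hexit.mem_incident hel) he
    exact ⟨l, hl, e, hexit.mem_getLast?_iff.2 ⟨hel, heX⟩, [], .inl ⟨rfl, he⟩, by simp⟩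

/-- Zorn's lemma gives a maximal linkage; its side absorbs all others since linkages have unions. -/
theorem exists_forall_side_subset (hs : s ∉ B) :
    ∃ L : G.Linkage s, Disjoint L.side B ∧
      ∀ L' : G.Linkage s, Disjoint L'.side B → L'.side ⊆ L.side := by
  obtain ⟨L, -, hLB, hmax⟩ := zorn_le_nonempty₀ {L : G.Linkage s | Disjoint L.side B}
    (fun c hcB hc L hL => by
      obtain ⟨K, hK, hle⟩ := exists_upper_bound hc ⟨L, hL⟩
      exact ⟨K, by simpa [hK] using fun L' hL' => hcB hL', hle⟩)
    (singleton G s) (Set.disjoint_singleton_left.2 hs)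
  refine ⟨L, hLB, fun L' hL' => ?_⟩
  obtain ⟨K, hK, hle⟩ := L.exists_side_eq_union L'
  have hKL : K.side ⊆ L.side := side_subset (hmax (by simpa [hK] using ⟨hLB, hL'⟩) hle)
  exact Set.subset_union_right.trans (hK ▸ hKL)

theorem isMinSepCut {L : G.Linkage s} (hLB : Disjoint L.side B)
    (hmax : ∀ L' : G.Linkage s, Disjoint L'.side B → L'.side ⊆ L.side) :
    G.IsMinSepCut {s} B (G.cut L.side) := by
  refine ⟨⟨L.side, by simpa using L.mem_side, fun b hb h => hLB.le_bot ⟨h, hb⟩, rfl⟩, ?_⟩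
  rintro _ ⟨Z, hsZ, hZB, rfl⟩ hZ
  have hcut : G.cut (L.side ∪ Z) ⊆ G.cut L.side := by
    rintro e ⟨x, y, hxy, hx | hx, hy⟩
    · exact ⟨x, y, hxy, hx, fun h => hy (.inl h)⟩
    · exact hZ ⟨x, y, hxy, hx, fun h => hy (.inr h)⟩
  obtain ⟨K, hK⟩ := L.exists_side_eq_of_cut_subset Set.subset_union_left hcut
  have hKB : Disjoint K.side B :=
    hK ▸ Set.disjoint_union_left.2 ⟨hLB, Set.disjoint_right.2 hZB⟩
  have hZL : Z ⊆ L.side := Set.subset_union_right.trans (hK ▸ hmax K hKB)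
  refine hZ.antisymm fun e he => ?_
  obtain ⟨l, hl, hel⟩ := L.cover e he
  have hexit := (L.isLink l hl).isExitWalk
  obtain ⟨f, hfl, hf⟩ := hexit.exists_mem_cut_of_subset (hsZ rfl) hZL
  rwa [hexit.eq_of_mem_cut hel he hfl (hZ hf)]

end Linkage

namespace Walk

variable {w z : V}

theorem start_mem_support (q : G.Walk u w) : u ∈ q.support := by
  cases q <;> simp [support]

theorem mem_support_of_mem_inc (q : G.Walk u w) (he : e ∈ q.edges) (hz : z ∈ G.inc e) :
    z ∈ q.support := by
  induction q with
  | nil => simp [edges] at he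
  | cons f hf q ih =>
    rcases List.mem_cons.1 he with rfl | he
    · rcases Sym2.mem_iff.1 (hf ▸ hz) with rfl | rfl
      exacts [List.mem_cons_self, List.mem_cons_of_mem _ q.start_mem_support]
    · exact List.mem_cons_of_mem _ (ih he)

theorem notMem_inc_of_mem_tail_edges (q : G.Walk u w) (hq : q.support.Nodup)
    (he : e ∈ q.edges.tail) : u ∉ G.inc e := by
  cases q with
  | nil => simp [edges] at he
  | cons f hf q => exact fun hu => (List.nodup_cons.1 hq).1 (q.mem_support_of_mem_inc he hu)

theorem end_mem_support (q : G.Walk u w) : w ∈ q.support := by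
  induction q with
  | nil => simp [support]
  | cons _ _ _ ih => exact List.mem_cons_of_mem _ ih

theorem exists_mem_edges_of_mem_support (q : G.Walk u w) (hz : z ∈ q.support) (hzu : z ≠ u) :
    ∃ e ∈ q.edges, z ∈ G.inc e := by
  induction q with
  | nil => exact absurd (List.mem_singleton.1 hz) hzu
  | @cons u v w e he q ih =>
    by_cases hzv : z = v
    · exact ⟨e, List.mem_cons_self, by simp [he, hzv]⟩
    · obtain ⟨f, hf, hzf⟩ := ih ((List.mem_cons.1 hz).resolve_left hzu) hzv
      exact ⟨f, List.mem_cons_of_mem _ hf, hzf⟩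

theorem exists_isExitWalk_prefix (q : G.Walk u w) (h : ∃ z ∈ q.support, z ∉ X) :
    ∃ l, l <+: q.edges ∧ G.IsExitWalk X u l := by
  induction q with
  | nil v =>
    obtain ⟨z, hz, hzX⟩ := h
    obtain rfl : z = v := by simpa [support] using hz
    exact ⟨[], List.nil_prefix, .nil hzX⟩
  | @cons u v w e he q ih =>
    by_cases hu : u ∈ X
    · obtain ⟨z, hz, hzX⟩ := h
      have hzu : z ≠ u := fun h => hzX (h ▸ hu)
      obtain ⟨l, hl, hexit⟩ := ih ⟨z, (List.mem_cons.1 hz).resolve_left hzu, hzX⟩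
      exact ⟨e :: l, (List.prefix_cons_inj e).2 hl, .cons hu he hexit⟩
    · exact ⟨[], List.nil_prefix, .nil hu⟩

theorem exists_suffix_of_mem_support (q : G.Walk u w) (hq : G.IsExitWalk X u q.edges)
    (hz : z ∈ q.support) :
    ∃ r : G.Walk z w, r.support <:+ q.support ∧ r.edges <:+ q.edges ∧
      G.IsExitWalk X z r.edges := by
  induction q with
  | nil v =>
    obtain rfl : z = v := by simpa [support] using hz
    exact ⟨.nil z, List.suffix_rfl, List.suffix_rfl, hq⟩
  | @cons u v w e he q ih =>
    by_cases hzu : z = u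
    · subst hzu
      exact ⟨.cons e he q, List.suffix_rfl, List.suffix_rfl, hq⟩
    · obtain ⟨r, hsupp, hedges, hr⟩ :=
        ih ((isExitWalk_cons_iff he).1 hq).2 ((List.mem_cons.1 hz).resolve_left hzu)
      exact ⟨r, hsupp.trans (List.suffix_cons _ _), hedges.trans (List.suffix_cons _ _), hr⟩

end Walk

theorem IsExitWalk.exists_path (h : G.IsExitWalk X u l) :
    ∃ (w : V) (q : G.Walk u w), q.support.Nodup ∧ q.edges ⊆ l ∧ G.IsExitWalk X u q.edges := by
  induction h with
  | @nil u hu => exact ⟨u, .nil u, by simp [Walk.support], List.Subset.refl _, .nil hu⟩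
  | @cons u v e l hu he _ ih =>
    obtain ⟨w, q, hnodup, hsub, hq⟩ := ih
    by_cases huq : u ∈ q.support
    · obtain ⟨r, hsupp, hedges, hr⟩ := q.exists_suffix_of_mem_support hq huq
      exact ⟨w, r, hnodup.sublist hsupp.sublist,
        fun f hf => List.mem_cons_of_mem _ (hsub (hedges.subset hf)), hr⟩
    · exact ⟨w, .cons e he q, List.nodup_cons.2 ⟨huq, hnodup⟩, List.cons_subset_cons e hsub,
        .cons hu he hq⟩

theorem IsLink.exists_sPath (h : G.IsLink s X l) (hs : s ∈ X) :
    ∃ p : G.SPath s, p.walk.edges ⊆ l ∧ p.walk.edges.head? = l.head? ∧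
      G.IsExitWalk X s p.walk.edges := by
  obtain ⟨e, k, v, rfl, he, hk⟩ := h.isExitWalk.exists_cons hs
  obtain ⟨w, q, hnodup, hsub, hq⟩ := hk.exists_path
  have hsq : s ∉ q.support := fun hsq => by
    have hsv : s ≠ v := fun hsv => G.not_isDiag e (by simp [he, hsv])
    obtain ⟨f, hf, hsf⟩ := q.exists_mem_edges_of_mem_support hsq hsv
    exact h.notMem_inc_of_mem_tail f (hsub hf) hsf
  exact ⟨⟨w, .cons e he q, List.nodup_cons.2 ⟨hsq, hnodup⟩, List.cons_ne_nil _ _⟩,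
    List.cons_subset_cons e hsub, rfl, .cons hs he hq⟩

theorem SPath.exists_isLink_prefix (p : G.SPath s) (h : ∃ z ∈ p.walk.support, z ∉ X) :
    ∃ l, l <+: p.walk.edges ∧ G.IsLink s X l := by
  obtain ⟨l, hl, hexit⟩ := p.walk.exists_isExitWalk_prefix h
  exact ⟨l, hl, hexit, fun e he =>
    p.walk.notMem_inc_of_mem_tail_edges p.support_nodup (hl.sublist.tail.subset he)⟩

theorem SPathDisjoint.exists_isLink_prefix {P : Set (G.SPath s)} (hP : G.SPathDisjoint P)
    (h : ∀ p ∈ P, ∃ z ∈ p.walk.support, z ∉ X) :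
    ∃ f : G.SPath s → List E, (∀ p ∈ P, f p <+: p.walk.edges ∧ G.IsLink s X (f p)) ∧
      (f '' P).Pairwise List.Disjoint := by
  choose! f hf using fun p hp => SPath.exists_isLink_prefix p (h p hp)
  refine ⟨f, hf, ?_⟩
  rintro _ ⟨p, hp, rfl⟩ _ ⟨q, hq, rfl⟩ hne e hep heq
  exact hP p hp q hq (fun hpq => hne (congrArg f hpq)) e ((hf p hp).1.subset hep)
    ((hf q hq).1.subset heq)

/-- The walks of the linkage are the initial segments of the members of `W` up to their first exit
from `X`. -/
theorem Linkage.exists_side_eq_of_lastEdges_eq {W : Set (G.SPath s)} (hW : G.SPathDisjoint W)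
    (hs : s ∈ X) (hcut : G.lastEdges W = G.cut X) : ∃ L : G.Linkage s, L.side = X := by
  have hleave : ∀ p ∈ W, ∃ z ∈ p.walk.support, z ∉ X := fun p hp => by
    obtain ⟨e, he⟩ : ∃ e, p.walk.edges.getLast? = some e :=
      ⟨_, List.getLast?_eq_some_getLast p.edges_ne_nil⟩
    obtain ⟨x, y, hxy, -, hy⟩ : e ∈ G.cut X := hcut ▸ ⟨p, hp, he⟩
    exact ⟨y, p.walk.mem_support_of_mem_inc (List.mem_of_mem_getLast? he) (by simp [hxy]), hy⟩
  obtain ⟨f, hf, hdisj⟩ := hW.exists_isLink_prefix hleave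
  refine ⟨⟨X, f '' W, hs, ?_, hdisj, fun e he => ?_⟩, rfl⟩
  · rintro _ ⟨p, hp, rfl⟩
    exact (hf p hp).2
  · obtain ⟨p, hp, hep⟩ : e ∈ G.lastEdges W := hcut ▸ he
    obtain ⟨hprefix, hlink⟩ := hf p hp
    obtain ⟨e', hle', he'⟩ := hlink.isExitWalk.exists_mem_cut_of_subset hs subset_rfl
    obtain ⟨p', hp', hep'⟩ : e' ∈ G.lastEdges W := hcut ▸ he'
    have hpp : p = p' := by
      by_contra hne
      exact hW p hp p' hp' hne e' (hprefix.subset hle') (List.mem_of_mem_getLast? hep')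
    subst hpp
    exact ⟨f p, ⟨p, hp, rfl⟩, Option.mem_unique hep' hep ▸ hle'⟩

theorem Linkage.exists_sPathDisjoint (L : G.Linkage s) :
    ∃ W : Set (G.SPath s), G.SPathDisjoint W ∧ G.lastEdges W = G.cut L.side ∧
      ∀ l ∈ L.walks, ∃ p ∈ W, p.walk.edges.head? = l.head? := by
  choose p hsub hhead hexit using fun l : L.walks => (L.isLink l l.2).exists_sPath L.mem_side
  refine ⟨Set.range p, ?_, Set.ext fun e => ⟨?_, fun he => ?_⟩,
    fun l hl => ⟨_, ⟨⟨l, hl⟩, rfl⟩, hhead _⟩⟩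
  · rintro _ ⟨l, rfl⟩ _ ⟨k, rfl⟩ hne e hel hek
    exact L.disjoint l.2 k.2 (fun h => hne (congrArg p (Subtype.ext h))) (hsub l hel) (hsub k hek)
  · rintro ⟨_, ⟨l, rfl⟩, he⟩
    exact (hexit l).mem_cut_of_mem_getLast? he
  · obtain ⟨l, hl, hel⟩ := L.cover e he
    obtain ⟨f, hf, hfcut⟩ := (hexit ⟨l, hl⟩).exists_mem_cut_of_subset L.mem_side subset_rfl
    obtain rfl := (L.isLink l hl).isExitWalk.eq_of_mem_cut hel he (hsub _ hf) hfcut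
    exact ⟨_, ⟨⟨l, hl⟩, rfl⟩, (hexit _).mem_getLast?_iff.2 ⟨hf, hfcut⟩⟩

theorem SPath.mem_head?_of_isPrefix (p : G.SPath s) (hl : l <+: p.walk.edges) (hne : l ≠ [])
    (he : e ∈ p.walk.edges) (hse : e ∈ G.inci s) : e ∈ l.head? := by
  obtain ⟨a, k, rfl⟩ := List.exists_cons_of_ne_nil hne
  obtain ⟨t, ht⟩ := hl
  rcases List.mem_cons.1 (by rwa [← ht] at he : e ∈ a :: (k ++ t)) with rfl | htail
  · rfl
  · refine absurd hse (p.walk.notMem_inc_of_mem_tail_edges p.support_nodup ?_)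
    rwa [← ht]

/-- An `st`-path viewed as a path starting at `s`. -/
def STPath.toSPath {t : V} (hst : s ≠ t) (p : G.STPath s t) : G.SPath s where
  last := t
  walk := p.walk
  support_nodup := p.support_nodup
  edges_ne_nil := by
    obtain ⟨q, -⟩ := p
    cases q with
    | nil => exact absurd rfl hst
    | cons => exact List.cons_ne_nil _ _

theorem STPathDisjoint.image_toSPath {t : V} {P : Set (G.STPath s t)} (hP : G.STPathDisjoint P)
    (hst : s ≠ t) : G.SPathDisjoint (STPath.toSPath hst '' P) := by
  rintro _ ⟨p, hp, rfl⟩ _ ⟨q, hq, rfl⟩ hne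
  exact hP p hp q hq fun hpq => hne (congrArg _ hpq)

end Multigraph

theorem large_wave_extending_general {V : Type u} {E : Type v} (G : Multigraph V E) {s : V}
    {B : Set V} (hs : s ∉ B) (P : Set (G.SPath s)) (hP : G.SPathDisjoint P)
    (hPB : ∀ p ∈ P, p.last ∈ B) :
    ∃ W : Set (G.SPath s), G.IsWave s B W ∧
      (∃ Y, s ∈ Y ∧ Disjoint Y B ∧ G.lastEdges W = G.cut Y ∧
        ∀ W' : Set (G.SPath s), G.SPathDisjoint W' →
          ∀ X, s ∈ X → Disjoint X B → G.lastEdges W' = G.cut X → X ⊆ Y) ∧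
      ∀ e ∈ G.inci s, (∃ p ∈ P, e ∈ p.walk.edges) → ∃ w ∈ W, e ∈ w.walk.edges := by
  obtain ⟨L, hLB, hmax⟩ := Multigraph.Linkage.exists_forall_side_subset (G := G) hs
  obtain ⟨f, hf, hfd⟩ := hP.exists_isLink_prefix (X := L.side)
    fun p hp => ⟨p.last, p.walk.end_mem_support, Set.disjoint_right.1 hLB (hPB p hp)⟩
  obtain ⟨K, hKL, hKP⟩ := L.exists_head?_eq (Set.forall_mem_image.2 fun p hp => (hf p hp).2) hfd
  obtain ⟨W, hW, hWK, hKW⟩ := K.exists_sPathDisjoint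
  rw [hKL] at hWK
  refine ⟨W, ⟨hW, hWK ▸ Multigraph.Linkage.isMinSepCut hLB hmax⟩,
    ⟨L.side, L.mem_side, hLB, hWK, fun W' hW' X hsX hXB hX => ?_⟩, fun e hes ⟨p, hp, hep⟩ => ?_⟩
  · obtain ⟨L', rfl⟩ := Multigraph.Linkage.exists_side_eq_of_lastEdges_eq hW' hsX hX
    exact hmax L' hXB
  · obtain ⟨k, hk, hkf⟩ := hKP _ ⟨p, hp, rfl⟩
    obtain ⟨w, hw, hwk⟩ := hKW k hk
    have hef : e ∈ (f p).head? := p.mem_head?_of_isPrefix (hf p hp).1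
      ((hf p hp).2.isExitWalk.ne_nil L.mem_side) hep hes
    exact ⟨w, hw, List.mem_of_mem_head? (hwk.trans hkf ▸ hef)⟩

/-- For every system `P` of pairwise edge-disjoint `st`-paths there is a large
`st`-wave `W` (its cut is `≼`-largest among all wave cuts) with
`δ_W(s) ⊇ δ_P(s)`. -/
theorem large_wave_extending {V : Type u} {E : Type v} (G : Multigraph V E)
    (s t : V) (hst : s ≠ t) (P : Set (G.STPath s t))
    (hP : G.STPathDisjoint P) :
    ∃ W : Set (G.SPath s), G.IsWave s {t} W ∧
      (∀ D : Set E, G.IsWaveCut s t D → G.CutLE s t D (G.lastEdges W)) ∧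
      ∀ e ∈ G.inci s, (∃ p ∈ P, e ∈ p.walk.edges) → ∃ w ∈ W, e ∈ w.walk.edges := by
  obtain ⟨W, hW, ⟨Y, hsY, hYt, hWY, hlargest⟩, hext⟩ :=
    large_wave_extending_general G (Set.notMem_singleton_iff.2 hst) _ (hP.image_toSPath hst)
      (Set.forall_mem_image.2 fun _ _ => rfl)
  refine ⟨W, hW, ?_, fun e hes ⟨p, hp, hep⟩ => hext e hes ⟨_, ⟨p, hp, rfl⟩, hep⟩⟩
  rintro _ ⟨W', ⟨hW', ⟨X, hsX, hXt, hX⟩, -⟩, rfl⟩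
  exact ⟨X, Y, hsX rfl, hXt t rfl, hX, hsY, Set.disjoint_singleton_right.1 hYt, hWY,
    hlargest W' hW' X (hsX rfl) (Set.disjoint_singleton_right.2 (hXt t rfl)) hX⟩
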